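/- Let n ≥ 2 be an integer and let c₂ ∈ (0,1) and c₀ ∈ (0, 1/2). There exist constants c′ > 0 and C > 0, depending only on n, c₂ and c₀, with the following property. Let a ≥ 1, let y₁, …, y_n ∈ ℝ^{n−1} × {0} ⊆ ℝⁿ be the vertices of a regular (n−1)-simplex of side length a with barycenter 0, and let G ⊆ ℝⁿ be a Lebesgue-measurable set such that c₂ ≤ λ(G) ≤ c₂^{−1} and c₂ ≤ λ(Star(y_i, G)) ≤ c₂^{−1} for each i = 1, …, n. Let Ω_{c₀} = {ω ∈ S^{n−1} : |⟨ω, e_n⟩| ≥ c₀}. Then for every R > c′·a one has λ(Cone(0, Ω_{c₀}) ∩ G \ B(0, R)) ≤ C·R^{−1/(2n−1)}. -/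

import Mathlib

open MeasureTheory
open scoped ENNReal

noncomputable section

/-- `starSet x A` is the union of all closed segments from `x` to points of `A`. -/
def starSet {n : ℕ} (x : EuclideanSpace ℝ (Fin n)) (A : Set (EuclideanSpace ℝ (Fin n))) :
    Set (EuclideanSpace ℝ (Fin n)) :=
  ⋃ y ∈ A, segment ℝ x y

/-- The projective involution `(u, s) ↦ (u / s, 1 / s)`, where `s` is the last coordinate. -/
def projInv {m : ℕ} (w : Fin (m + 1) → ℝ) : Fin (m + 1) → ℝ :=
  fun k => if k = Fin.last m then (w (Fin.last m))⁻¹ else w k * (w (Fin.last m))⁻¹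

lemma projInv_last {m : ℕ} (w : Fin (m + 1) → ℝ) :
    projInv w (Fin.last m) = (w (Fin.last m))⁻¹ := by
  simp [projInv]

lemma projInv_projInv {m : ℕ} {w : Fin (m + 1) → ℝ} (hw : w (Fin.last m) ≠ 0) :
    projInv (projInv w) = w := by
  ext k
  by_cases hk : k = Fin.last m
  · simp [projInv, hk]
  · simp [projInv, hk, hw]

lemma measurable_projInv {m : ℕ} : Measurable (projInv (m := m)) := by
  refine measurable_pi_lambda _ fun k => ?_
  by_cases hk : k = Fin.last m
  · simp only [projInv, hk, if_true]
    fun_prop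
  · simp only [projInv, hk, if_false]
    fun_prop

/-- The Jacobian matrix of `projInv`. -/
def projInvJac {m : ℕ} (w : Fin (m + 1) → ℝ) : Matrix (Fin (m + 1)) (Fin (m + 1)) ℝ :=
  Matrix.of fun k j =>
    if j = Fin.last m then
      if k = Fin.last m then -(w (Fin.last m) ^ 2)⁻¹ else -w k * (w (Fin.last m) ^ 2)⁻¹
    else if k = j then (w (Fin.last m))⁻¹ else 0

lemma hasFDerivAt_projInv {m : ℕ} {w : Fin (m + 1) → ℝ} (hw : w (Fin.last m) ≠ 0) :
    HasFDerivAt projInv (Matrix.toLin' (projInvJac w)).toContinuousLinearMap w := by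
  rw [hasFDerivAt_pi']
  intro k
  have hl : HasFDerivAt (fun v : Fin (m + 1) → ℝ => v (Fin.last m))
      (ContinuousLinearMap.proj (R := ℝ) (φ := fun _ => ℝ) (Fin.last m)) w :=
    hasFDerivAt_apply _ _
  have hinv := (hasDerivAt_inv hw).comp_hasFDerivAt w hl
  by_cases hk : k = Fin.last m
  · subst hk
    simp only [projInv, if_true]
    refine hinv.congr_fderiv ?_
    ext v
    simp [projInvJac, Matrix.mulVec, dotProduct, Fin.sum_univ_castSucc,
      (Fin.castSucc_lt_last _).ne, (Fin.castSucc_lt_last _).ne']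
  · simp only [projInv, hk, if_false]
    have hkk : HasFDerivAt (fun v : Fin (m + 1) → ℝ => v k)
        (ContinuousLinearMap.proj (R := ℝ) (φ := fun _ => ℝ) k) w := hasFDerivAt_apply _ _
    refine (hkk.mul hinv).congr_fderiv ?_
    obtain ⟨k, rfl⟩ := Fin.exists_castSucc_eq.mpr hk
    ext v
    simp [projInvJac, Matrix.mulVec, dotProduct, Fin.sum_univ_castSucc,
      (Fin.castSucc_lt_last _).ne]
    ring

lemma det_projInvJac {m : ℕ} (w : Fin (m + 1) → ℝ) :
    (projInvJac w).det = -((w (Fin.last m))⁻¹ ^ (m + 2)) := by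
  rw [Matrix.det_of_isUpperTriangular]
  · rw [Fin.prod_univ_castSucc]
    simp [projInvJac, (Fin.castSucc_lt_last _).ne]
    ring
  · intro i j hij
    have hj : j ≠ Fin.last m := (lt_of_lt_of_le hij (Fin.le_last i)).ne
    simp [projInvJac, hj, (show j < i from hij).ne']

lemma volume_image_projInv_le {m : ℕ} {A : Set (Fin (m + 1) → ℝ)} (hA : MeasurableSet A)
    {δ : ℝ} (hδ : 0 < δ) (hAδ : ∀ x ∈ A, δ ≤ x (Fin.last m)) :
    volume (projInv '' A) ≤ ENNReal.ofReal (δ⁻¹ ^ (m + 2)) * volume A := by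
  refine (addHaar_image_le_lintegral_abs_det_fderiv volume hA fun x hx =>
    (hasFDerivAt_projInv (hδ.trans_le (hAδ x hx)).ne').hasFDerivWithinAt).trans ?_
  rw [← setLIntegral_const]
  refine setLIntegral_mono' hA fun x hx => ENNReal.ofReal_le_ofReal ?_
  have hx0 := hδ.trans_le (hAδ x hx)
  rw [ContinuousLinearMap.det, LinearMap.coe_toContinuousLinearMap, LinearMap.det_toLin',
    det_projInvJac, abs_neg, abs_of_pos (by positivity)]
  gcongr
  exact hAδ x hx

lemma volume_mul_le_of_lines {m : ℕ} (hm : 0 < m) {E F : Set (Fin (m + 1) → ℝ)}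
    (hE : MeasurableSet E) (hF : MeasurableSet F) (c : ℝ≥0∞)
    (hline : ∀ z ∈ E, ∀ i, c ≤ volume {t : ℝ | Function.update z i t ∈ F}) :
    (c ^ (1 / m : ℝ)) ^ (m + 1) * volume E ≤ volume F ^ (1 + 1 / m : ℝ) := by
  have hm' : (0 : ℝ) < m := by exact_mod_cast hm
  have key := lintegral_mul_prod_lintegral_pow_le (fun _ : Fin (m + 1) => (volume : Measure ℝ))
    (p := 1 / m) (by positivity) (by simp [hm'.ne'])
    (f := F.indicator 1) (measurable_one.indicator hF)
  rw [← volume_pi, lintegral_indicator_one hF] at key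
  refine le_trans ?_ key
  rw [← setLIntegral_const]
  refine (setLIntegral_mono' hE fun z hz => ?_).trans (setLIntegral_le_lintegral E _)
  have h0 : (1 - (Fintype.card (Fin (m + 1)) - 1 : ℝ) * (1 / m)) = 0 := by simp [hm'.ne']
  rw [h0, ENNReal.rpow_zero, one_mul]
  have : (c ^ (1 / m : ℝ)) ^ (m + 1) = ∏ _i : Fin (m + 1), c ^ (1 / m : ℝ) := by simp
  rw [this]
  refine Finset.prod_le_prod' fun i _ => ENNReal.rpow_le_rpow ?_ (by positivity)
  refine (hline z hz i).trans (le_of_eq ?_)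
  have hmeas : MeasurableSet {t : ℝ | Function.update z i t ∈ F} :=
    measurable_update z hF
  rw [← lintegral_indicator_one hmeas]
  rfl

/-- The linear map sending the `i`-th basis vector to `y i + e_n`. -/
def liftMatrix {m : ℕ} (y : Fin (m + 1) → Fin (m + 1) → ℝ) :
    Matrix (Fin (m + 1)) (Fin (m + 1)) ℝ :=
  Matrix.of fun k i => y i k + if k = Fin.last m then 1 else 0

lemma inner_regular_simplex {V : Type*} [NormedAddCommGroup V] [InnerProductSpace ℝ V] {m : ℕ}
    {a : ℝ} {y : Fin (m + 1) → V} (hy : ∀ i j, i ≠ j → ‖y i - y j‖ = a) (hs : ∑ i, y i = 0)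
    (i j : Fin (m + 1)) :
    inner ℝ (y i) (y j) = a ^ 2 / 2 * (if i = j then 1 else 0) - a ^ 2 / (2 * (m + 1)) := by
  have hd : ∀ i j, ‖y i‖ ^ 2 - 2 * inner ℝ (y i) (y j) + ‖y j‖ ^ 2 =
      a ^ 2 - a ^ 2 * (if i = j then 1 else 0) := by
    intro i j
    rw [← norm_sub_sq_real]
    by_cases h : i = j
    · simp [h]
    · simp [h, hy i j h]
  have hin : ∀ i, ∑ j, inner ℝ (y i) (y j) = 0 := fun i => by
    rw [← inner_sum, hs, inner_zero_right]
  have h1 : ∀ i, (m + 1) * ‖y i‖ ^ 2 + ∑ j, ‖y j‖ ^ 2 = m * a ^ 2 := by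
    intro i
    have := Finset.sum_congr rfl fun j (_ : j ∈ Finset.univ) => hd i j
    simp only [Finset.sum_add_distrib, Finset.sum_sub_distrib, ← Finset.mul_sum, hin] at this
    simp at this
    linarith
  have h2 : ∑ j, ‖y j‖ ^ 2 = m * a ^ 2 / 2 := by
    have := Finset.sum_congr rfl fun j (_ : j ∈ Finset.univ) => h1 j
    simp only [Finset.sum_add_distrib, ← Finset.mul_sum] at this
    simp at this
    have hm : (m + 1 : ℝ) ≠ 0 := by positivity
    apply mul_left_cancel₀ hm
    linarith
  have h3 : ∀ i, ‖y i‖ ^ 2 = m * a ^ 2 / (2 * (m + 1)) := by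
    intro i
    have := h1 i
    rw [h2] at this
    field_simp
    linarith
  have := hd i j
  rw [h3, h3] at this
  have h4 : m * a ^ 2 / (2 * (m + 1)) = a ^ 2 / 2 - a ^ 2 / (2 * (m + 1 : ℝ)) := by
    field_simp
    ring
  rw [h4] at this
  linarith

lemma det_liftMatrix_sq {m : ℕ} {a : ℝ} (ha : a ≠ 0)
    {y : Fin (m + 1) → EuclideanSpace ℝ (Fin (m + 1))}
    (hy0 : ∀ i, y i (Fin.last m) = 0) (hy : ∀ i j, i ≠ j → ‖y i - y j‖ = a)
    (hs : ∑ i, y i = 0) :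
    (liftMatrix fun i => (y i).ofLp).det ^ 2 = (a ^ 2 / 2) ^ m * (m + 1) := by
  set b := a ^ 2 / 2 with hb
  have hb0 : b ≠ 0 := by positivity
  have hgram : (liftMatrix fun i => (y i).ofLp).transpose * (liftMatrix fun i => (y i).ofLp) =
      b • (1 + Matrix.replicateCol Unit (fun _ : Fin (m + 1) => (1 - a ^ 2 / (2 * (m + 1))) / b) *
        Matrix.replicateRow Unit (fun _ : Fin (m + 1) => (1 : ℝ)) :
          Matrix (Fin (m + 1)) (Fin (m + 1)) ℝ) := by
    ext i j
    have h := inner_regular_simplex hy hs j i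
    simp only [PiLp.inner_apply, Fin.sum_univ_castSucc, hy0] at h
    simp [Matrix.mul_apply, liftMatrix, Fin.sum_univ_castSucc, hy0, (Fin.castSucc_lt_last _).ne,
      Matrix.one_apply, eq_comm] at h ⊢
    rw [← h, mul_add, mul_div_cancel₀ _ hb0]
    split_ifs <;> ring
  have := congrArg Matrix.det hgram
  rw [Matrix.det_mul, Matrix.det_transpose, Matrix.det_smul,
    Matrix.det_one_add_replicateCol_mul_replicateRow, ← sq] at this
  rw [this]
  simp [dotProduct]
  rw [pow_succ, mul_assoc]
  congr 1
  field_simp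
  rw [hb]
  ring

lemma toLin_liftMatrix_update {m : ℕ} (y : Fin (m + 1) → Fin (m + 1) → ℝ)
    (z : Fin (m + 1) → ℝ) (i : Fin (m + 1)) (t : ℝ) (k : Fin (m + 1)) :
    Matrix.toLin' (liftMatrix y) (Function.update z i t) k =
      Matrix.toLin' (liftMatrix y) z k + (t - z i) * (y i k + if k = Fin.last m then 1 else 0) := by
  have : Function.update z i t = z + (t - z i) • Pi.single i 1 := by
    ext j
    by_cases hj : j = i
    · subst hj; simp
    · simp [hj]
  rw [this, map_add, map_smul]
  simp [liftMatrix]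

lemma projInv_toLin_liftMatrix_update {m : ℕ} {y : Fin (m + 1) → Fin (m + 1) → ℝ}
    (hy0 : ∀ i, y i (Fin.last m) = 0) (z : Fin (m + 1) → ℝ) (i : Fin (m + 1)) (t : ℝ)
    {s s' : ℝ} (hs : Matrix.toLin' (liftMatrix y) z (Fin.last m) = s) (hs0 : s ≠ 0)
    (hs' : s + (t - z i) = s') (hs'0 : s' ≠ 0) :
    projInv (Matrix.toLin' (liftMatrix y) (Function.update z i t)) =
      (1 - s / s') • y i + (s / s') • projInv (Matrix.toLin' (liftMatrix y) z) := by
  have ht : t - z i = s' - s := by linarith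
  ext k
  by_cases hk : k = Fin.last m
  · subst hk
    simp only [projInv_last, toLin_liftMatrix_update, hs, hy0, ht, Pi.add_apply, Pi.smul_apply,
      smul_eq_mul, if_true, zero_add, mul_one, add_sub_cancel]
    field_simp
    ring
  · simp only [projInv, hk, if_false, toLin_liftMatrix_update, hs, hy0, ht, Pi.add_apply,
      Pi.smul_apply, smul_eq_mul, if_true, zero_add, add_zero, mul_one, add_sub_cancel]
    field_simp
    ring

lemma image_projInv_eq_preimage {m : ℕ} {A : Set (Fin (m + 1) → ℝ)}
    (hA : ∀ x ∈ A, x (Fin.last m) ≠ 0) : projInv '' A = projInv ⁻¹' A := by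
  ext w
  constructor
  · rintro ⟨x, hx, rfl⟩
    rwa [Set.mem_preimage, projInv_projInv (hA x hx)]
  · intro hw
    refine ⟨projInv w, hw, projInv_projInv fun h0 => hA _ hw ?_⟩
    rw [projInv_last, h0, inv_zero]

/-- The constant in the bound for a slab `h ≤ x_n ≤ 2 h`. -/
def slabConst (m : ℕ) (d K : ℝ) : ℝ :=
  2 ^ (m + 2) * ((m + 1) * 2 ^ (m + 2) * K) ^ (1 + 1 / m : ℝ) * d ^ (-(1 / m) : ℝ)

lemma slabConst_pos {m : ℕ} {d K : ℝ} (hd : 0 < d) (hK : 0 < K) : 0 < slabConst m d K := by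
  unfold slabConst
  positivity

lemma slab_bound_eq {m : ℕ} (hm : 0 < m) {d K h : ℝ} (hd : 0 < d) (hK : 0 < K) (hh : 0 < h) :
    (2 * h) ^ (m + 2) * (d * (h ^ (1 + 1 / m : ℝ) *
      (d⁻¹ * ((m + 1) * (((h / 2)⁻¹) ^ (m + 2) * K))) ^ (1 + 1 / m : ℝ))) =
    slabConst m d K * h ^ (-(1 / m) : ℝ) := by
  have hm' : (m : ℝ) ≠ 0 := by positivity
  have e : d⁻¹ * ((m + 1) * (((h / 2)⁻¹) ^ (m + 2) * K)) =
      d ^ (-1 : ℝ) * (h ^ (-(m + 2) : ℝ) * ((m + 1) * 2 ^ (m + 2) * K)) := by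
    rw [Real.rpow_neg hd.le, Real.rpow_one, Real.rpow_neg hh.le,
      show (m + 2 : ℝ) = ((m + 2 : ℕ) : ℝ) by push_cast; rfl, Real.rpow_natCast, inv_div, div_pow]
    ring
  have e2 : (2 * h) ^ (m + 2) = 2 ^ (m + 2) * h ^ (m + 2 : ℝ) := by
    rw [mul_pow, show (m + 2 : ℝ) = ((m + 2 : ℕ) : ℝ) by push_cast; rfl, Real.rpow_natCast]
  have hd1 : d ^ (1 : ℝ) * d ^ (-1 * (1 + 1 / m) : ℝ) = d ^ (-(1 / m) : ℝ) := by
    rw [← Real.rpow_add hd]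
    congr 1
    ring
  have hh1 : h ^ (m + 2 : ℝ) * h ^ (1 + 1 / m : ℝ) * h ^ (-(m + 2) * (1 + 1 / m) : ℝ) =
      h ^ (-(1 / m) : ℝ) := by
    rw [← Real.rpow_add hh, ← Real.rpow_add hh]
    congr 1
    field_simp
    ring
  rw [e, e2, Real.mul_rpow (by positivity) (by positivity),
    Real.mul_rpow (by positivity) (by positivity), ← Real.rpow_mul hd.le, ← Real.rpow_mul hh.le,
    slabConst, ← hd1, ← hh1, Real.rpow_one]
  ring

lemma volume_slab_le {m : ℕ} (hm : 0 < m) {y : Fin (m + 1) → Fin (m + 1) → ℝ}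
    (hy0 : ∀ i, y i (Fin.last m) = 0) {d : ℝ} (hd : 0 < d) (hdet : d ≤ |(liftMatrix y).det|)
    {K : ℝ} (hK : 0 < K) {G : Set (Fin (m + 1) → ℝ)} (hG : MeasurableSet G)
    {M : Fin (m + 1) → Set (Fin (m + 1) → ℝ)} (hM : ∀ i, MeasurableSet (M i))
    (hMK : ∀ i, volume (M i) ≤ ENNReal.ofReal K) (hstar : ∀ i, ∀ x ∈ G, segment ℝ (y i) x ⊆ M i)
    {h : ℝ} (hh : 0 < h) :
    volume (G ∩ {x | h ≤ x (Fin.last m) ∧ x (Fin.last m) ≤ 2 * h}) ≤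
      ENNReal.ofReal (slabConst m d K * h ^ (-(1 / m) : ℝ)) := by
  have hm' : (m : ℝ) ≠ 0 := by positivity
  set D := |(liftMatrix y).det|
  have hD0 : 0 < D := hd.trans_le hdet
  set T := Matrix.toLin' (liftMatrix y) with hT
  have hdetT : LinearMap.det T = (liftMatrix y).det := by rw [hT, LinearMap.det_toLin']
  have hTne : LinearMap.det T ≠ 0 := by
    rw [hdetT]
    exact abs_pos.1 hD0
  have hvolT : ∀ s, volume (T ⁻¹' s) = ENNReal.ofReal D⁻¹ * volume s := fun s => by
    rw [Measure.addHaar_preimage_linearMap volume hTne, hdetT, abs_inv]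
  have hTmeas : Measurable T := T.continuous_of_finiteDimensional.measurable
  set A := G ∩ {x | h ≤ x (Fin.last m) ∧ x (Fin.last m) ≤ 2 * h}
  set B : Fin (m + 1) → Set (Fin (m + 1) → ℝ) :=
    fun i => M i ∩ {x | h / 2 ≤ x (Fin.last m) ∧ x (Fin.last m) ≤ h}
  have hslab : ∀ p q : ℝ, MeasurableSet
      {x : Fin (m + 1) → ℝ | p ≤ x (Fin.last m) ∧ x (Fin.last m) ≤ q} := fun p q =>
    (measurableSet_le measurable_const (measurable_pi_apply _)).inter
      (measurableSet_le (measurable_pi_apply _) measurable_const)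
  have hAm : MeasurableSet A := hG.inter (hslab _ _)
  have hBm : ∀ i, MeasurableSet (B i) := fun i => (hM i).inter (hslab _ _)
  have hA0 : ∀ x ∈ A, x (Fin.last m) ≠ 0 := fun x hx => (hh.trans_le hx.2.1).ne'
  have hB0 : ∀ i, ∀ x ∈ B i, x (Fin.last m) ≠ 0 := fun i x hx =>
    ((half_pos hh).trans_le hx.2.1).ne'
  have hA'm : MeasurableSet (projInv '' A) := by
    rw [image_projInv_eq_preimage hA0]
    exact measurable_projInv hAm
  have hB'm : ∀ i, MeasurableSet (projInv '' B i) := fun i => by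
    rw [image_projInv_eq_preimage (hB0 i)]
    exact measurable_projInv (hBm i)
  set E := T ⁻¹' (projInv '' A) with hE
  set F := T ⁻¹' (⋃ i, projInv '' B i) with hF
  have hline : ∀ z ∈ E, ∀ i,
      ENNReal.ofReal h⁻¹ ≤ volume {t : ℝ | Function.update z i t ∈ F} := by
    intro z hz i
    rw [hE, image_projInv_eq_preimage hA0] at hz
    obtain ⟨hzG, hz1, hz2⟩ := hz
    rw [projInv_last] at hz1 hz2
    set s := T z (Fin.last m) with hs
    have hs0 : 0 < s := inv_pos.1 (hh.trans_le hz1)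
    have hsh : s ≤ h⁻¹ := by rwa [le_inv_comm₀ hs0 hh]
    have hIcc : volume (Set.Icc (z i + (h⁻¹ - s)) (z i + (2 * h⁻¹ - s))) =
        ENNReal.ofReal h⁻¹ := by
      rw [Real.volume_Icc]
      congr 1
      ring
    rw [← hIcc]
    refine measure_mono fun t ht => ?_
    obtain ⟨ht1, ht2⟩ := ht
    obtain ⟨s', hs'⟩ : ∃ s', s + (t - z i) = s' := ⟨_, rfl⟩
    have hs'1 : h⁻¹ ≤ s' := by linarith
    have hs'2 : s' ≤ 2 * h⁻¹ := by linarith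
    have hs'0 : 0 < s' := (inv_pos.2 hh).trans_le hs'1
    have hmem := projInv_toLin_liftMatrix_update hy0 z i t hs.symm hs0.ne' hs' hs'0.ne'
    refine Set.mem_iUnion.2 ⟨i, ?_⟩
    rw [image_projInv_eq_preimage (hB0 i)]
    have hlast : projInv (T (Function.update z i t)) (Fin.last m) = s'⁻¹ := by
      rw [projInv_last, hT, toLin_liftMatrix_update, hy0, ← hT, ← hs]
      simp [← hs']
    refine ⟨?_, ?_, ?_⟩
    · refine hstar i _ hzG ?_
      rw [hmem]
      refine ⟨1 - s / s', s / s', ?_, by positivity, by ring, rfl⟩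
      rw [sub_nonneg, div_le_one hs'0]
      exact hsh.trans hs'1
    · rw [hlast, le_inv_comm₀ (by positivity) hs'0]
      refine hs'2.trans (le_of_eq ?_)
      field_simp
    · rw [hlast]
      exact inv_le_of_inv_le₀ hh hs'1
  have hFm : MeasurableSet F := hTmeas (MeasurableSet.iUnion hB'm)
  have hgrid := volume_mul_le_of_lines hm (hTmeas hA'm) hFm _ hline
  have hVF : volume F ≤
      ENNReal.ofReal (D⁻¹ * ((m + 1) * (((h / 2)⁻¹) ^ (m + 2) * K))) := by
    rw [hF, hvolT, ENNReal.ofReal_mul (by positivity)]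
    gcongr
    refine (measure_iUnion_le _).trans ?_
    rw [tsum_fintype]
    refine (Finset.sum_le_sum fun i _ =>
      (?_ : _ ≤ ENNReal.ofReal (((h / 2)⁻¹) ^ (m + 2) * K))).trans (le_of_eq ?_)
    · refine (volume_image_projInv_le (hBm i) (half_pos hh) fun x hx => hx.2.1).trans ?_
      rw [ENNReal.ofReal_mul (by positivity)]
      gcongr
      exact (measure_mono Set.inter_subset_left).trans (hMK i)
    · rw [ENNReal.ofReal_mul (by positivity : (0 : ℝ) ≤ m + 1)]
      simp only [Finset.sum_const, Finset.card_univ, Fintype.card_fin, nsmul_eq_mul]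
      congr 1
      rw [show (m + 1 : ℝ) = ((m + 1 : ℕ) : ℝ) by push_cast; rfl, ENNReal.ofReal_natCast]
  have hpow : (ENNReal.ofReal h⁻¹ ^ (1 / m : ℝ)) ^ (m + 1) =
      ENNReal.ofReal (h⁻¹ ^ (1 + 1 / m : ℝ)) := by
    rw [← ENNReal.rpow_natCast, ← ENNReal.rpow_mul,
      ENNReal.ofReal_rpow_of_pos (inv_pos.2 hh)]
    congr 2
    push_cast
    field_simp
  have hVE : volume E ≤ ENNReal.ofReal (h ^ (1 + 1 / m : ℝ) *
      (D⁻¹ * ((m + 1) * (((h / 2)⁻¹) ^ (m + 2) * K))) ^ (1 + 1 / m : ℝ)) := by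
    have h1 : volume E = ENNReal.ofReal (h ^ (1 + 1 / m : ℝ)) *
        (ENNReal.ofReal (h⁻¹ ^ (1 + 1 / m : ℝ)) * volume E) := by
      rw [← mul_assoc, ← ENNReal.ofReal_mul (by positivity),
        ← Real.mul_rpow hh.le (inv_pos.2 hh).le, mul_inv_cancel₀ hh.ne', Real.one_rpow,
        ENNReal.ofReal_one, one_mul]
    rw [h1, ENNReal.ofReal_mul (by positivity),
      ← ENNReal.ofReal_rpow_of_nonneg (p := 1 + 1 / (m : ℝ)) (x := D⁻¹ * _) (by positivity)
        (by positivity)]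
    gcongr
    rw [← hpow]
    refine hgrid.trans ?_
    gcongr
  have hVA' : volume (projInv '' A) = ENNReal.ofReal D * volume E := by
    rw [hE, hvolT, ← mul_assoc, ← ENNReal.ofReal_mul hD0.le, mul_inv_cancel₀ hD0.ne',
      ENNReal.ofReal_one, one_mul]
  have hAA : volume A ≤ ENNReal.ofReal ((2 * h) ^ (m + 2)) * volume (projInv '' A) := by
    have hinv : projInv '' (projInv '' A) = A := by
      rw [Set.image_image]
      exact (Set.image_congr fun x hx => projInv_projInv (hA0 x hx)).trans (Set.image_id' A)
    have := volume_image_projInv_le hA'm (δ := (2 * h)⁻¹) (by positivity) (by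
      rintro _ ⟨x, hx, rfl⟩
      rw [projInv_last]
      exact inv_anti₀ (hh.trans_le hx.2.1) hx.2.2)
    rwa [hinv, inv_inv] at this
  calc volume A ≤ ENNReal.ofReal ((2 * h) ^ (m + 2)) * (ENNReal.ofReal D *
        ENNReal.ofReal (h ^ (1 + 1 / m : ℝ) *
      (D⁻¹ * ((m + 1) * (((h / 2)⁻¹) ^ (m + 2) * K))) ^ (1 + 1 / m : ℝ))) := by
        refine hAA.trans ?_
        rw [hVA']
        gcongr
    _ = ENNReal.ofReal (slabConst m D K * h ^ (-(1 / m) : ℝ)) := by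
        rw [← ENNReal.ofReal_mul hD0.le, ← ENNReal.ofReal_mul (by positivity),
          slab_bound_eq hm hD0 hK hh]
    _ ≤ _ := by
        refine ENNReal.ofReal_le_ofReal ?_
        unfold slabConst
        gcongr ?_ * ?_ * ?_ * ?_
        exact Real.rpow_le_rpow_of_nonpos hd hdet (by simp)

lemma volume_halfSpace_le {m : ℕ} (hm : 0 < m) {y : Fin (m + 1) → Fin (m + 1) → ℝ}
    (hy0 : ∀ i, y i (Fin.last m) = 0) {d : ℝ} (hd : 0 < d) (hdet : d ≤ |(liftMatrix y).det|)
    {K : ℝ} (hK : 0 < K) {G : Set (Fin (m + 1) → ℝ)} (hG : MeasurableSet G)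
    {M : Fin (m + 1) → Set (Fin (m + 1) → ℝ)} (hM : ∀ i, MeasurableSet (M i))
    (hMK : ∀ i, volume (M i) ≤ ENNReal.ofReal K) (hstar : ∀ i, ∀ x ∈ G, segment ℝ (y i) x ⊆ M i)
    {h : ℝ} (hh : 0 < h) :
    volume (G ∩ {x | h ≤ x (Fin.last m)}) ≤
      ENNReal.ofReal (slabConst m d K * (1 - 2 ^ (-(1 / m) : ℝ))⁻¹ * h ^ (-(1 / m) : ℝ)) := by
  set q : ℝ := 2 ^ (-(1 / m) : ℝ) with hq
  have hq0 : 0 ≤ q := by positivity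
  have hq1 : q < 1 := Real.rpow_lt_one_of_one_lt_of_neg one_lt_two (by simpa using hm)
  have hC := (slabConst_pos (m := m) hd hK).le
  have hcover : G ∩ {x | h ≤ x (Fin.last m)} ⊆
      ⋃ k : ℕ, G ∩ {x | 2 ^ k * h ≤ x (Fin.last m) ∧ x (Fin.last m) ≤ 2 * (2 ^ k * h)} := by
    rintro x ⟨hxG, hx⟩
    obtain ⟨k, hk1, hk2⟩ := exists_nat_pow_near (x := x (Fin.last m) / h) (y := (2 : ℝ))
      (by rwa [one_le_div hh]) one_lt_two
    rw [le_div_iff₀ hh] at hk1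
    rw [div_lt_iff₀ hh, pow_succ] at hk2
    exact Set.mem_iUnion.2 ⟨k, hxG, hk1, by linarith⟩
  refine (measure_mono hcover).trans ((measure_iUnion_le _).trans ?_)
  have hterm : ∀ k : ℕ,
      volume (G ∩ {x | 2 ^ k * h ≤ x (Fin.last m) ∧ x (Fin.last m) ≤ 2 * (2 ^ k * h)}) ≤
      ENNReal.ofReal (slabConst m d K * h ^ (-(1 / m) : ℝ) * q ^ k) := by
    intro k
    refine (volume_slab_le hm hy0 hd hdet hK hG hM hMK hstar (by positivity)).trans (le_of_eq ?_)
    congr 1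
    rw [Real.mul_rpow (by positivity) hh.le, hq, ← Real.rpow_natCast 2 k,
      ← Real.rpow_mul_natCast zero_le_two, ← Real.rpow_mul zero_le_two, mul_comm (k : ℝ)]
    ring
  refine (ENNReal.tsum_le_tsum hterm).trans (le_of_eq ?_)
  rw [← ENNReal.ofReal_tsum_of_nonneg (fun k => by positivity)
    ((summable_geometric_of_lt_one hq0 hq1).mul_left _), tsum_mul_left,
    tsum_geometric_of_lt_one hq0 hq1]
  congr 1
  ring

lemma liftMatrix_det_ge {m : ℕ} {a : ℝ} (ha : 1 ≤ a)
    {y : Fin (m + 1) → EuclideanSpace ℝ (Fin (m + 1))}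
    (hy0 : ∀ i, y i (Fin.last m) = 0) (hy : ∀ i j, i ≠ j → ‖y i - y j‖ = a)
    (hs : ∑ i, y i = 0) :
    √((1 / 2) ^ m) ≤ |(liftMatrix fun i => (y i).ofLp).det| := by
  rw [← Real.sqrt_sq_eq_abs, det_liftMatrix_sq (by positivity) hy0 hy hs]
  refine Real.sqrt_le_sqrt ?_
  have h1 : (1 / 2 : ℝ) ^ m ≤ (a ^ 2 / 2) ^ m := by
    gcongr
    exact one_le_pow₀ ha
  have h2 : (0 : ℝ) ≤ (a ^ 2 / 2) ^ m * m := by positivity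
  linarith

lemma volume_halfSpace_le_of_starSet {m : ℕ} (hm : 0 < m) {a : ℝ} (ha : 1 ≤ a)
    {y : Fin (m + 1) → EuclideanSpace ℝ (Fin (m + 1))}
    (hy0 : ∀ i, y i (Fin.last m) = 0) (hy : ∀ i j, i ≠ j → ‖y i - y j‖ = a)
    (hs : ∑ i, y i = 0) {K : ℝ} (hK : 0 < K) {G : Set (EuclideanSpace ℝ (Fin (m + 1)))}
    (hG : MeasurableSet G) (hstar : ∀ i, volume (starSet (y i) G) ≤ ENNReal.ofReal K)
    {h : ℝ} (hh : 0 < h) :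
    volume (G ∩ {x | h ≤ x (Fin.last m)}) ≤
      ENNReal.ofReal (slabConst m (√((1 / 2) ^ m)) K * (1 - 2 ^ (-(1 / m) : ℝ))⁻¹ *
        h ^ (-(1 / m) : ℝ)) := by
  have hvp := PiLp.volume_preserving_toLp (Fin (m + 1))
  have hhalf : MeasurableSet {x : EuclideanSpace ℝ (Fin (m + 1)) | h ≤ x (Fin.last m)} :=
    measurableSet_le measurable_const (by fun_prop)
  rw [← hvp.measure_preimage (hG.inter hhalf).nullMeasurableSet]
  refine volume_halfSpace_le hm (y := fun i => (y i).ofLp) hy0 (by positivity)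
    (liftMatrix_det_ge ha hy0 hy hs) hK (hvp.measurable hG)
    (M := fun i => WithLp.toLp 2 ⁻¹' toMeasurable volume (starSet (y i) G))
    (fun i => hvp.measurable (measurableSet_toMeasurable _ _)) (fun i => ?_) ?_ hh
  · rw [hvp.measure_preimage (measurableSet_toMeasurable _ _).nullMeasurableSet,
      measure_toMeasurable]
    exact hstar i
  · rintro i x hx _ ⟨b, c, hb, hc, hbc, rfl⟩
    refine subset_toMeasurable _ _ (Set.mem_biUnion hx ⟨b, c, hb, hc, hbc, ?_⟩)
    ext k
    simp

lemma starSet_neg {n : ℕ} (x : EuclideanSpace ℝ (Fin n)) (A : Set (EuclideanSpace ℝ (Fin n))) :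
    starSet (-x) (-A) ⊆ -starSet x A := by
  rintro _ hz
  obtain ⟨v, hv, b, c, hb, hc, hbc, rfl⟩ := Set.mem_iUnion₂.1 hz
  refine Set.mem_biUnion (show -v ∈ A from hv) ⟨b, c, hb, hc, hbc, ?_⟩
  simp [add_comm]

/-- decay of mass of `G` in the vertical cone away from the origin. -/
theorem statement17 (n : ℕ) (hn : 2 ≤ n) (c₂ c₀ : ℝ)
    (hc₂ : c₂ ∈ Set.Ioo (0 : ℝ) 1) (hc₀ : c₀ ∈ Set.Ioo (0 : ℝ) (1 / 2)) :
    ∃ c' C : ℝ, 0 < c' ∧ 0 < C ∧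
      ∀ a : ℝ, 1 ≤ a →
      ∀ y : Fin n → EuclideanSpace ℝ (Fin n),
        (∀ i, y i ⟨n - 1, by omega⟩ = 0) →
        (∀ i j, i ≠ j → ‖y i - y j‖ = a) →
        (∑ i, y i) = 0 →
      ∀ G : Set (EuclideanSpace ℝ (Fin n)), MeasurableSet G →
        ENNReal.ofReal c₂ ≤ volume G → volume G ≤ ENNReal.ofReal c₂⁻¹ →
        (∀ i, ENNReal.ofReal c₂ ≤ volume (starSet (y i) G) ∧
              volume (starSet (y i) G) ≤ ENNReal.ofReal c₂⁻¹) →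
      ∀ R : ℝ, c' * a < R →
        volume (({x : EuclideanSpace ℝ (Fin n) | c₀ * ‖x‖ ≤ |x ⟨n - 1, by omega⟩|} ∩ G) \
            Metric.ball 0 R) ≤
          ENNReal.ofReal (C * R ^ (-(1 : ℝ) / (2 * (n : ℝ) - 1))) := by
  obtain ⟨m, rfl⟩ : ∃ m, n = m + 1 := ⟨n - 1, by omega⟩
  have hm : 0 < m := by omega
  have hm1 : (1 : ℝ) ≤ m := by exact_mod_cast hm
  obtain ⟨hc₂0, -⟩ := hc₂
  obtain ⟨hc₀0, -⟩ := hc₀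
  have hK : 0 < c₂⁻¹ := inv_pos.2 hc₂0
  set C := slabConst m (√((1 / 2) ^ m)) c₂⁻¹ * (1 - 2 ^ (-(1 / m) : ℝ))⁻¹
  have hC0 : 0 < C := by
    refine mul_pos (slabConst_pos (by positivity) hK) (inv_pos.2 (sub_pos.2 ?_))
    exact Real.rpow_lt_one_of_one_lt_of_neg one_lt_two (by simpa using hm)
  refine ⟨1, 2 * (C * c₀ ^ (-(1 / m) : ℝ)), one_pos, by positivity, ?_⟩
  intro a ha y hy0 hy hs G hG _ _ hstar R hR
  replace hy0 : ∀ i, y i (Fin.last m) = 0 := hy0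
  change volume (({x | c₀ * ‖x‖ ≤ |x (Fin.last m)|} ∩ G) \ Metric.ball 0 R) ≤ _
  have hR1 : 1 ≤ R := by linarith
  have hR0 : 0 < R := by linarith
  have hh : 0 < c₀ * R := by positivity
  have hup := volume_halfSpace_le_of_starSet hm ha hy0 hy hs hK hG (fun i => (hstar i).2) hh
  have hdown := volume_halfSpace_le_of_starSet hm ha (y := fun i => -y i) (by simpa using hy0)
    (fun i j hij => by rw [neg_sub_neg, norm_sub_rev]; exact hy i j hij) (by simpa using hs) hK
    hG.neg (fun i => (measure_mono (starSet_neg _ _)).trans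
      ((Measure.measure_neg volume _).trans_le (hstar i).2)) hh
  have hcover : ({x : EuclideanSpace ℝ (Fin (m + 1)) | c₀ * ‖x‖ ≤ |x (Fin.last m)|} ∩ G) \
      Metric.ball 0 R ⊆ (G ∩ {x | c₀ * R ≤ x (Fin.last m)}) ∪
        -(-G ∩ {x | c₀ * R ≤ x (Fin.last m)}) := by
    rintro x ⟨⟨hx, hxG⟩, hxR⟩
    have hxR' : R ≤ ‖x‖ := by simpa using hxR
    have hx' : c₀ * R ≤ |x (Fin.last m)| := le_trans (by gcongr) hx
    rcases le_abs.1 hx' with h | h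
    · exact Or.inl ⟨hxG, h⟩
    · exact Or.inr ⟨by simpa using hxG, by simpa using h⟩
  refine (measure_mono hcover).trans ((measure_union_le _ _).trans ?_)
  rw [Measure.measure_neg]
  refine (add_le_add hup hdown).trans ?_
  rw [← ENNReal.ofReal_add (by positivity) (by positivity)]
  refine ENNReal.ofReal_le_ofReal ?_
  have hexp : R ^ (-(1 / m) : ℝ) ≤ R ^ (-(1 : ℝ) / (2 * ((m + 1 : ℕ) : ℝ) - 1)) := by
    refine Real.rpow_le_rpow_of_exponent_le hR1 ?_
    rw [neg_div, neg_le_neg_iff]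
    push_cast
    exact one_div_le_one_div_of_le (by linarith) (by linarith)
  rw [Real.mul_rpow hc₀0.le hR0.le]
  calc _ = 2 * (C * c₀ ^ (-(1 / m) : ℝ)) * R ^ (-(1 / m) : ℝ) := by ring
    _ ≤ _ := by gcongr
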